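/- There exists a universal constant C > 0 with the following property. Let d ≥ 1, let ρ̄ be a probability measure on the torus 𝕋^d, and let φ : 𝕋^d × 𝕋^d → ℝ be a bounded measurable function satisfying the cancellations ∫_{𝕋^d} φ(x,y) dρ̄(x) = 0 for every y ∈ 𝕋^d and ∫_{𝕋^d} φ(x,y) dρ̄(y) = 0 for every x ∈ 𝕋^d. If γ := C‖φ‖_{L^∞}² < 1, then for every integer N ≥ 2, ∫_{(𝕋^d)^N} exp( N |⟨φ, μ_N ⊗ μ_N⟩| ) dρ̄^{⊗N}(x_1,…,x_N) ≤ 2/(1 − γ). -/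

import Mathlib

/-!
Separate the diagonal `D = N⁻¹ ∑ᵢ φ(xᵢ, xᵢ)` from the off-diagonal part `U`. The convexity bound
`exp |D + U| ≤ cosh (2 D) + cosh (2 U)` keeps the dependence on `‖φ‖∞` quadratic: it spares the
factor `exp ‖φ‖∞` that bounding `|D|` directly would cost, and `cosh (2 D) ≤ exp (2 ‖φ‖∞²)`.

For `U`, averaging over all subsets `I` of the indices and Jensen's inequality reduce to sums over
`i ∈ I`, `j ∉ I`, where `(xᵢ)` and `(xⱼ)` are independent. Given `x`, the function
`g = ∑ᵢ φ(xᵢ, ·)` is centered, so `exp g ≤ g + exp (g²)` and Jensen's inequality bound the integral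
over the `xⱼ` by the integral of `exp (N g²)` over a single variable `y`. For fixed `y`, `g` is a
centered sum of independent bounded variables of `x`, hence sub-Gaussian, and the exponential moment
of its square is at most that of a Gaussian.
-/

open MeasureTheory

/-- The `d`-dimensional torus `𝕋^d`. -/
abbrev Torus (d : ℕ) := Fin d → AddCircle (2 * Real.pi)

open ProbabilityTheory Finset

open scoped NNReal

section RealInequalities

lemma exp_le_add_exp_sq (x : ℝ) : Real.exp x ≤ x + Real.exp (x ^ 2) := by
  rcases le_or_gt |x| 1 with hx | hx
  · have := (abs_le.1 (Real.abs_exp_sub_one_sub_id_le hx)).2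
    linarith [Real.add_one_le_exp (x ^ 2)]
  · rcases lt_abs.1 hx with hx | hx
    · have : Real.exp x ≤ Real.exp (x ^ 2) := Real.exp_le_exp.2 (by nlinarith)
      linarith
    · have : Real.exp x ≤ 1 := Real.exp_le_one_iff.2 (by linarith)
      nlinarith [Real.add_one_le_exp (x ^ 2)]

lemma exp_abs_add_le_cosh_add_cosh (x y : ℝ) :
    Real.exp |x + y| ≤ Real.cosh (2 * x) + Real.cosh (2 * y) := by
  have two_mul_exp_add_le (u v : ℝ) :
      2 * Real.exp (u + v) ≤ Real.exp (2 * u) + Real.exp (2 * v) := by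
    rw [Real.exp_add, two_mul u, two_mul v, Real.exp_add, Real.exp_add]
    nlinarith [sq_nonneg (Real.exp u - Real.exp v)]
  have hneg := two_mul_exp_add_le (-x) (-y)
  rw [← neg_add, mul_neg, mul_neg] at hneg
  rw [Real.cosh_eq, Real.cosh_eq]
  linarith [Real.exp_abs_le (x + y), two_mul_exp_add_le x y]

lemma cosh_le_one_div_one_sub {x : ℝ} (hx : x ^ 2 / 2 < 1) :
    Real.cosh x ≤ 1 / (1 - x ^ 2 / 2) :=
  (Real.cosh_le_exp_half_sq x).trans (Real.exp_bound_div_one_sub_of_interval (by positivity) hx)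

lemma inv_sqrt_le_one_div {x : ℝ} (hx : 0 < x) (hx' : x ≤ 1) : (√x)⁻¹ ≤ 1 / x := by
  rw [one_div]
  exact inv_anti₀ hx (Real.le_sqrt_of_sq_le (by nlinarith))

lemma abs_sum_le_card_mul {ι : Type*} {s : Finset ι} {f : ι → ℝ} {b : ℝ}
    (hf : ∀ i ∈ s, |f i| ≤ b) : |∑ i ∈ s, f i| ≤ #s * b :=
  calc
    |∑ i ∈ s, f i| ≤ ∑ i ∈ s, |f i| := abs_sum_le_sum_abs _ _
    _ ≤ #s * b := by simpa using sum_le_card_nsmul s (fun i => |f i|) b hf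

end RealInequalities

section Decoupling

variable {ι : Type*} [Fintype ι]

lemma sum_sum_eq_sum_diag_add_sum_offDiag (a : ι → ι → ℝ) :
    ∑ i, ∑ j, a i j = ∑ i, a i i + ∑ p ∈ univ.offDiag, a p.1 p.2 := by
  classical
  rw [← sum_product', ← diag_union_offDiag, sum_union (disjoint_diag_offDiag _), sum_diag]

lemma four_mul_card_Icc_singleton_compl [DecidableEq ι] {i j : ι} (hij : i ≠ j) :
    4 * #(Icc {i} ({j}ᶜ : Finset ι)) = 2 ^ Fintype.card ι := by
  have hcard : 1 < Fintype.card ι := Fintype.one_lt_card_iff.2 ⟨i, j, hij⟩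
  rw [card_Icc_finset (by simpa using hij.symm), card_compl, card_singleton, card_singleton]
  obtain ⟨n, hn⟩ := Nat.exists_eq_add_of_le hcard
  simp [hn, pow_add]

lemma four_mul_sum_sum_product_compl [DecidableEq ι] (a : ι × ι → ℝ) :
    4 * ∑ I : Finset ι, ∑ p ∈ I ×ˢ Iᶜ, a p = 2 ^ Fintype.card ι * ∑ p ∈ univ.offDiag, a p := by
  have hswap : ∑ I : Finset ι, ∑ p ∈ I ×ˢ Iᶜ, a p
      = ∑ p ∈ univ.offDiag, ∑ _I ∈ Icc {p.1} ({p.2}ᶜ : Finset ι), a p := by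
    refine sum_comm' fun I p => ?_
    simp only [mem_univ, true_and, mem_product, mem_compl, mem_Icc, mem_offDiag,
      singleton_subset_iff, subset_compl_singleton]
    grind
  rw [hswap, mul_sum, mul_sum]
  refine sum_congr rfl fun p hp => ?_
  have hcard := four_mul_card_Icc_singleton_compl (mem_offDiag.1 hp).2.2
  rw [sum_const, nsmul_eq_mul, ← mul_assoc]
  exact_mod_cast congrArg (· * a p) (congrArg (Nat.cast (R := ℝ)) hcard)

lemma exp_sum_offDiag_le [DecidableEq ι] (a : ι × ι → ℝ) :
    Real.exp (∑ p ∈ univ.offDiag, a p)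
      ≤ ∑ I : Finset ι, (2 ^ Fintype.card ι : ℝ)⁻¹ * Real.exp (∑ p ∈ I ×ˢ Iᶜ, 4 * a p) := by
  have haverage : ∑ p ∈ univ.offDiag, a p
      = ∑ I : Finset ι, (2 ^ Fintype.card ι : ℝ)⁻¹ * ∑ p ∈ I ×ˢ Iᶜ, 4 * a p := by
    simp_rw [← mul_sum]
    rw [four_mul_sum_sum_product_compl, inv_mul_cancel_left₀ (by positivity)]
  rw [haverage]
  exact convexOn_exp.map_sum_le (fun _ _ => by positivity) (by simp) (by simp)

lemma exp_card_mul_abs_le_cosh_add_cosh [Nonempty ι] (a : ι → ι → ℝ) {b : ℝ}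
    (ha : ∀ i, |a i i| ≤ b) :
    Real.exp (Fintype.card ι * |((Fintype.card ι : ℝ) ^ 2)⁻¹ * ∑ i, ∑ j, a i j|)
      ≤ Real.cosh (2 * b)
        + Real.cosh (∑ p ∈ univ.offDiag, 2 / (Fintype.card ι : ℝ) * a p.1 p.2) := by
  set n : ℝ := (Fintype.card ι : ℝ) with hn
  have hn_pos : 0 < n := by rw [hn]; exact_mod_cast Fintype.card_pos
  set D := n⁻¹ * ∑ i, a i i with hD
  set U := n⁻¹ * ∑ p ∈ univ.offDiag, a p.1 p.2 with hU
  have hsplit : n * |(n ^ 2)⁻¹ * ∑ i, ∑ j, a i j| = |D + U| := by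
    rw [← abs_of_pos hn_pos, ← abs_mul, abs_of_pos hn_pos, sum_sum_eq_sum_diag_add_sum_offDiag]
    congr 1
    simp only [hD, hU]
    field_simp
  have hD_le : |D| ≤ |b| :=
    calc
      |D| = n⁻¹ * |∑ i, a i i| := by rw [hD, abs_mul, abs_of_pos (inv_pos.2 hn_pos)]
      _ ≤ n⁻¹ * (n * b) := by gcongr; exact abs_sum_le_card_mul fun i _ => ha i
      _ = b := inv_mul_cancel_left₀ hn_pos.ne' b
      _ ≤ |b| := le_abs_self b
  have hcosh : Real.cosh (2 * D) ≤ Real.cosh (2 * b) := by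
    rw [Real.cosh_le_cosh, abs_mul 2 D, abs_mul 2 b]
    exact mul_le_mul_of_nonneg_left hD_le (abs_nonneg 2)
  have hU_eq : ∑ p ∈ univ.offDiag, 2 / n * a p.1 p.2 = 2 * U := by
    rw [← mul_sum, hU, ← mul_assoc, div_eq_mul_inv]
  rw [hsplit, hU_eq]
  linarith [exp_abs_add_le_cosh_add_cosh D U]

end Decoupling

section SubGaussian

lemma integral_exp_mul_sq_gaussianReal {v : ℝ≥0} {a : ℝ} (h : 2 * a * v < 1) :
    ∫ x, Real.exp (a * x ^ 2) ∂gaussianReal 0 v = (√(1 - 2 * a * v))⁻¹ := by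
  rcases eq_or_ne v 0 with rfl | hv
  · simp
  have hdensity (x : ℝ) : gaussianPDFReal 0 v x • Real.exp (a * x ^ 2)
      = (√(2 * Real.pi * v))⁻¹ * Real.exp (-((2 * v : ℝ)⁻¹ - a) * x ^ 2) := by
    rw [gaussianPDFReal, smul_eq_mul, mul_assoc, ← Real.exp_add]
    congr 2
    field_simp
    ring
  simp_rw [integral_gaussianReal_eq_integral_smul hv, hdensity]
  rw [integral_const_mul, integral_gaussian, ← Real.sqrt_inv, ← Real.sqrt_inv,
    ← Real.sqrt_mul (by positivity)]
  congr 1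
  have : 1 - 2 * a * v ≠ 0 := by linarith
  field_simp

lemma integrable_exp_mul_sq_gaussianReal {v : ℝ≥0} {a : ℝ} (h : 2 * a * v < 1) :
    Integrable (fun x => Real.exp (a * x ^ 2)) (gaussianReal 0 v) := by
  refine .of_integral_ne_zero ?_
  rw [integral_exp_mul_sq_gaussianReal h]
  exact (inv_pos.2 (Real.sqrt_pos.2 (by linarith))).ne'

variable {Ω : Type*} {mΩ : MeasurableSpace Ω} {μ : Measure Ω} {X : Ω → ℝ} {c : ℝ≥0}

lemma integrable_exp_mul_prod_gaussianReal [SFinite μ] (hX : HasSubgaussianMGF X c μ) {v : ℝ≥0}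
    (h : c * v < 1) :
    Integrable (fun p : Ω × ℝ => Real.exp (p.2 * X p.1)) (μ.prod (gaussianReal 0 v)) := by
  have hmeas : AEStronglyMeasurable (fun p : Ω × ℝ => Real.exp (p.2 * X p.1))
      (μ.prod (gaussianReal 0 v)) :=
    Real.continuous_exp.comp_aestronglyMeasurable
      (measurable_snd.aestronglyMeasurable.mul hX.aestronglyMeasurable.comp_fst)
  refine (integrable_prod_iff' hmeas).2 ⟨ae_of_all _ hX.integrable_exp_mul, ?_⟩
  refine (integrable_exp_mul_sq_gaussianReal (v := v) (a := c / 2) ?_).mono'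
    hmeas.norm.prod_swap.integral_prod_right' (ae_of_all _ fun g => ?_)
  · rw [mul_div_cancel₀ _ two_ne_zero]
    exact_mod_cast h
  · simp only [Real.norm_eq_abs, Real.abs_exp]
    rw [abs_of_nonneg (integral_nonneg fun _ => (Real.exp_pos _).le), div_mul_eq_mul_div]
    exact hX.mgf_le g

/-- The square is linearized through a Gaussian variable `G` of variance `2 a`, for which
`exp (a * s ^ 2)` is the expectation of `exp (G * s)`. -/
lemma integral_exp_mul_sq_le_of_hasSubgaussianMGF [SFinite μ] (hX : HasSubgaussianMGF X c μ)
    {a : ℝ} (ha : 0 ≤ a) (h : 2 * a * c < 1) :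
    ∫ ω, Real.exp (a * X ω ^ 2) ∂μ ≤ (√(1 - 2 * a * c))⁻¹ := by
  obtain ⟨v, hv⟩ : ∃ v : ℝ≥0, (v : ℝ) = 2 * a := ⟨⟨2 * a, by positivity⟩, rfl⟩
  have hcv : (c : ℝ) * v < 1 := by rw [hv]; linarith
  have hlinear (s : ℝ) : Real.exp (a * s ^ 2) = ∫ g, Real.exp (g * s) ∂gaussianReal 0 v := by
    have := congrFun (mgf_fun_id_gaussianReal (μ := 0) (v := v)) s
    simp_rw [mgf, mul_comm s] at this
    rw [this, hv]
    ring_nf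
  have hint := integrable_exp_mul_prod_gaussianReal hX (v := v) (by exact_mod_cast hcv)
  have h' : 2 * ((c : ℝ) / 2) * v < 1 := by linarith
  calc
    ∫ ω, Real.exp (a * X ω ^ 2) ∂μ
        = ∫ ω, ∫ g, Real.exp (g * X ω) ∂gaussianReal 0 v ∂μ := by simp_rw [hlinear]
    _ = ∫ g, mgf X μ g ∂gaussianReal 0 v := integral_integral_swap hint
    _ ≤ ∫ g, Real.exp (c / 2 * g ^ 2) ∂gaussianReal 0 v :=
      integral_mono hint.integral_prod_right (integrable_exp_mul_sq_gaussianReal h') fun g =>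
        (hX.mgf_le g).trans_eq (by ring_nf)
    _ = (√(1 - 2 * a * c))⁻¹ := by
      rw [integral_exp_mul_sq_gaussianReal h', hv]
      ring_nf

lemma hasSubgaussianMGF_sum_pi {ι : Type*} [Fintype ι] [IsProbabilityMeasure μ]
    (hX : HasSubgaussianMGF X c μ) :
    HasSubgaussianMGF (fun ω : ι → Ω => ∑ i, X (ω i)) (Fintype.card ι * c)
      (Measure.pi fun _ => μ) := by
  have hindep : iIndepFun (fun i (ω : ι → Ω) => X (ω i)) (Measure.pi fun _ => μ) :=
    iIndepFun_pi fun _ => hX.aemeasurable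
  have heval (i : ι) : HasSubgaussianMGF (fun ω : ι → Ω => X (ω i)) c (Measure.pi fun _ => μ) :=
    .of_map (Y := Function.eval i) (measurable_pi_apply i).aemeasurable
      (by rwa [(measurePreserving_eval (fun _ => μ) i).map_eq])
  simpa using HasSubgaussianMGF.sum_of_iIndepFun hindep (s := univ) fun i _ => heval i

lemma integral_exp_mul_sq_sum_pi_le {ι : Type*} [Fintype ι] [IsProbabilityMeasure μ] {b a : ℝ}
    (hX : AEMeasurable X μ) (hb : ∀ ω, |X ω| ≤ b) (h0 : ∫ ω, X ω ∂μ = 0) (ha : 0 ≤ a)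
    (h : 2 * a * (Fintype.card ι * b ^ 2) < 1) :
    ∫ ω : ι → Ω, Real.exp (a * (∑ i, X (ω i)) ^ 2) ∂(Measure.pi fun _ => μ)
      ≤ (√(1 - 2 * a * (Fintype.card ι * b ^ 2)))⁻¹ := by
  have hsubG := hasSubgaussianMGF_sum_pi (ι := ι) <|
    hasSubgaussianMGF_of_mem_Icc_of_integral_eq_zero hX
      (ae_of_all μ fun ω => abs_le.1 (hb ω)) h0
  have hparam : ((Fintype.card ι * (‖b - -b‖₊ / 2) ^ 2 : ℝ≥0) : ℝ) = Fintype.card ι * b ^ 2 := by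
    push_cast
    rw [Real.norm_eq_abs, div_pow, sq_abs]
    ring
  simpa only [hparam] using
    integral_exp_mul_sq_le_of_hasSubgaussianMGF hsubG ha (by rwa [hparam])

end SubGaussian

section BoundedVariables

variable {Ω : Type*} [MeasurableSpace Ω] {μ : Measure Ω} {f : Ω → ℝ} {b : ℝ}

lemma integrable_exp_of_abs_le [IsFiniteMeasure μ] (hf : AEMeasurable f μ)
    (hb : ∀ ω, |f ω| ≤ b) : Integrable (fun ω => Real.exp (f ω)) μ := by
  simpa using integrable_exp_mul_of_mem_Icc (t := 1) hf (ae_of_all μ fun ω => abs_le.1 (hb ω))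

lemma integrable_exp_mul_sq_of_abs_le [IsFiniteMeasure μ] (hf : AEMeasurable f μ)
    (hb : ∀ ω, |f ω| ≤ b) (t : ℝ) : Integrable (fun ω => Real.exp (t * f ω ^ 2)) μ := by
  refine integrable_exp_of_abs_le (b := |t| * b ^ 2) ((hf.pow_const 2).const_mul t) fun ω => ?_
  rw [abs_mul, abs_pow]
  gcongr
  exact hb ω

lemma integral_exp_le_integral_exp_sq [IsProbabilityMeasure μ] (hf : AEMeasurable f μ)
    (hb : ∀ ω, |f ω| ≤ b) (h0 : ∫ ω, f ω ∂μ = 0) :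
    ∫ ω, Real.exp (f ω) ∂μ ≤ ∫ ω, Real.exp (f ω ^ 2) ∂μ := by
  have hint : Integrable f μ := .of_bound hf.aestronglyMeasurable b (ae_of_all _ hb)
  have hint_sq : Integrable (fun ω => Real.exp (f ω ^ 2)) μ := by
    simpa using integrable_exp_mul_sq_of_abs_le hf hb 1
  calc
    ∫ ω, Real.exp (f ω) ∂μ ≤ ∫ ω, (f ω + Real.exp (f ω ^ 2)) ∂μ :=
      integral_mono (integrable_exp_of_abs_le hf hb) (hint.add hint_sq) fun ω =>
        exp_le_add_exp_sq (f ω)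
    _ = ∫ ω, Real.exp (f ω ^ 2) ∂μ := by rw [integral_add hint hint_sq, h0, zero_add]

lemma integral_exp_sum_pi_le_integral_exp_card_mul_sq {κ : Type*} [Fintype κ]
    [IsProbabilityMeasure μ] (hf : AEMeasurable f μ) (hb : ∀ ω, |f ω| ≤ b)
    (h0 : ∫ ω, f ω ∂μ = 0) :
    ∫ ω : κ → Ω, Real.exp (∑ j, f (ω j)) ∂(Measure.pi fun _ => μ)
      ≤ ∫ ω, Real.exp (Fintype.card κ * f ω ^ 2) ∂μ := by
  have hint (t : ℝ) := integrable_exp_mul_sq_of_abs_le hf hb t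
  calc
    ∫ ω : κ → Ω, Real.exp (∑ j, f (ω j)) ∂(Measure.pi fun _ => μ)
        = (∫ ω, Real.exp (f ω) ∂μ) ^ Fintype.card κ := by
      simp_rw [Real.exp_sum]
      exact integral_fintype_prod_eq_pow fun ω => Real.exp (f ω)
    _ ≤ (∫ ω, Real.exp (f ω ^ 2) ∂μ) ^ Fintype.card κ := by
      refine pow_le_pow_left₀ (integral_nonneg fun _ => (Real.exp_pos _).le) ?_ _
      exact integral_exp_le_integral_exp_sq hf hb h0
    _ ≤ ∫ ω, Real.exp (f ω ^ 2) ^ Fintype.card κ ∂μ :=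
      (convexOn_pow (Fintype.card κ)).map_integral_le (by fun_prop) isClosed_Ici
        (ae_of_all _ fun _ => (Real.exp_pos _).le) (by simpa using hint 1)
        (by simpa only [Function.comp_def, ← Real.exp_nat_mul] using hint (Fintype.card κ))
    _ = ∫ ω, Real.exp (Fintype.card κ * f ω ^ 2) ∂μ := by simp_rw [← Real.exp_nat_mul]

end BoundedVariables

/-- A measurable kernel bounded by `b` which is completely degenerate, in the sense of U-statistics:
both of its marginal integrals vanish identically. For `μ = ν = ρ̄` and `b = ‖φ‖_{L^∞}` these are
the assumptions of the theorem on `φ`. -/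
structure IsDegenerateKernel {X Y : Type*} [MeasurableSpace X] [MeasurableSpace Y]
    (φ : X → Y → ℝ) (μ : Measure X) (ν : Measure Y) (b : ℝ) : Prop where
  measurable : Measurable (Function.uncurry φ)
  abs_le : ∀ x y, |φ x y| ≤ b
  integral_left : ∀ y, ∫ x, φ x y ∂μ = 0
  integral_right : ∀ x, ∫ y, φ x y ∂ν = 0

namespace IsDegenerateKernel

variable {X Y : Type*} [MeasurableSpace X] [MeasurableSpace Y] {φ : X → Y → ℝ} {μ : Measure X}
  {ν : Measure Y} {b : ℝ}

lemma const_mul (hφ : IsDegenerateKernel φ μ ν b) (c : ℝ) :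
    IsDegenerateKernel (fun x y => c * φ x y) μ ν (|c| * b) where
  measurable := hφ.measurable.const_mul c
  abs_le x y := by
    rw [abs_mul]
    gcongr
    exact hφ.abs_le x y
  integral_left y := by rw [integral_const_mul, hφ.integral_left, mul_zero]
  integral_right x := by rw [integral_const_mul, hφ.integral_right, mul_zero]

lemma neg (hφ : IsDegenerateKernel φ μ ν b) : IsDegenerateKernel (fun x y => -φ x y) μ ν b := by
  simpa using hφ.const_mul (-1)

lemma measurable_comp {Ω : Type*} [MeasurableSpace Ω] (hφ : IsDegenerateKernel φ μ ν b)
    {u : Ω → X} {v : Ω → Y} (hu : Measurable u) (hv : Measurable v) :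
    Measurable fun ω => φ (u ω) (v ω) :=
  hφ.measurable.comp (hu.prodMk hv)

lemma integral_sum_right_eq_zero {ι : Type*} [Fintype ι] [IsFiniteMeasure ν]
    (hφ : IsDegenerateKernel φ μ ν b) (x : ι → X) : ∫ y, ∑ i, φ (x i) y ∂ν = 0 := by
  have hint (i : ι) : Integrable (φ (x i)) ν :=
    .of_bound hφ.measurable.of_uncurry_left.aestronglyMeasurable b (ae_of_all _ (hφ.abs_le (x i)))
  rw [integral_finsetSum _ fun i _ => hint i]
  exact sum_eq_zero fun i _ => hφ.integral_right (x i)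

lemma integrable_exp_sum {ι Ω : Type*} [MeasurableSpace Ω] {P : Measure Ω} [IsFiniteMeasure P]
    (hφ : IsDegenerateKernel φ μ ν b) (s : Finset ι) {u : ι → Ω → X} {v : ι → Ω → Y}
    (hu : ∀ i, Measurable (u i)) (hv : ∀ i, Measurable (v i)) :
    Integrable (fun ω => Real.exp (∑ i ∈ s, φ (u i ω) (v i ω))) P :=
  integrable_exp_of_abs_le
    (measurable_fun_sum s fun i _ => hφ.measurable_comp (hu i) (hv i)).aemeasurable
    fun _ => abs_sum_le_card_mul fun _ _ => hφ.abs_le _ _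

lemma integral_exp_sum_prod_le {ι κ : Type*} [Fintype ι] [Fintype κ] [IsProbabilityMeasure μ]
    [IsProbabilityMeasure ν] (hφ : IsDegenerateKernel φ μ ν b)
    (h : 2 * Fintype.card ι * Fintype.card κ * b ^ 2 < 1) :
    ∫ z : (ι → X) × (κ → Y), Real.exp (∑ i, ∑ j, φ (z.1 i) (z.2 j))
        ∂(Measure.pi fun _ => μ).prod (Measure.pi fun _ => ν)
      ≤ (√(1 - 2 * Fintype.card ι * Fintype.card κ * b ^ 2))⁻¹ := by
  set g : (ι → X) → Y → ℝ := fun x y => ∑ i, φ (x i) y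
  have hg_meas : Measurable (Function.uncurry g) := measurable_fun_sum _ fun i _ =>
    hφ.measurable_comp ((measurable_pi_apply i).comp measurable_fst) measurable_snd
  have hg_le (x : ι → X) (y : Y) : |g x y| ≤ Fintype.card ι * b :=
    abs_sum_le_card_mul fun i _ => hφ.abs_le (x i) y
  have hint : Integrable (fun z : (ι → X) × (κ → Y) => Real.exp (∑ i, ∑ j, φ (z.1 i) (z.2 j)))
      ((Measure.pi fun _ => μ).prod (Measure.pi fun _ => ν)) := by
    simp_rw [← sum_product']
    exact hφ.integrable_exp_sum _ (u := fun (p : ι × κ) (z : (ι → X) × (κ → Y)) => z.1 p.1)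
      (v := fun (p : ι × κ) (z : (ι → X) × (κ → Y)) => z.2 p.2)
      (fun _ => by fun_prop) fun _ => by fun_prop
  have hint_sq : Integrable (fun z : (ι → X) × Y => Real.exp (Fintype.card κ * g z.1 z.2 ^ 2))
      ((Measure.pi fun _ => μ).prod ν) :=
    integrable_exp_mul_sq_of_abs_le hg_meas.aemeasurable (fun z => hg_le z.1 z.2) _
  have hright (x : ι → X) : ∫ y : κ → Y, Real.exp (∑ i, ∑ j, φ (x i) (y j)) ∂(Measure.pi fun _ => ν)
      ≤ ∫ y, Real.exp (Fintype.card κ * g x y ^ 2) ∂ν := by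
    simp_rw [sum_comm (s := univ (α := ι))]
    exact integral_exp_sum_pi_le_integral_exp_card_mul_sq
      hg_meas.of_uncurry_left.aemeasurable (hg_le x) (hφ.integral_sum_right_eq_zero x)
  have hcard : 2 * Fintype.card ι * Fintype.card κ * b ^ 2
      = 2 * Fintype.card κ * (Fintype.card ι * b ^ 2) := by ring
  have hleft (y : Y) : ∫ x : ι → X, Real.exp (Fintype.card κ * g x y ^ 2) ∂(Measure.pi fun _ => μ)
      ≤ (√(1 - 2 * Fintype.card ι * Fintype.card κ * b ^ 2))⁻¹ := by
    rw [hcard] at h ⊢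
    exact integral_exp_mul_sq_sum_pi_le
      (hφ.measurable_comp measurable_id measurable_const).aemeasurable
      (fun x => hφ.abs_le x y) (hφ.integral_left y) (Nat.cast_nonneg _) h
  rw [integral_prod _ hint]
  calc
    _ ≤ ∫ x, ∫ y, Real.exp (Fintype.card κ * g x y ^ 2) ∂ν ∂(Measure.pi fun _ : ι => μ) :=
      integral_mono hint.integral_prod_left hint_sq.integral_prod_left hright
    _ = ∫ y, ∫ x, Real.exp (Fintype.card κ * g x y ^ 2) ∂(Measure.pi fun _ : ι => μ) ∂ν :=
      integral_integral_swap hint_sq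
    _ ≤ ∫ _, (√(1 - 2 * Fintype.card ι * Fintype.card κ * b ^ 2))⁻¹ ∂ν :=
      integral_mono hint_sq.integral_prod_right (integrable_const _) hleft
    _ = (√(1 - 2 * Fintype.card ι * Fintype.card κ * b ^ 2))⁻¹ := by simp

variable {ι : Type*} [Fintype ι] {φ : X → X → ℝ} [IsProbabilityMeasure μ]

lemma integral_exp_sum_product_compl_le [DecidableEq ι] (hφ : IsDegenerateKernel φ μ μ b)
    (h : (Fintype.card ι * b) ^ 2 / 2 < 1) (I : Finset ι) :
    ∫ x : ι → X, Real.exp (∑ p ∈ I ×ˢ Iᶜ, φ (x p.1) (x p.2)) ∂(Measure.pi fun _ => μ)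
      ≤ (√(1 - (Fintype.card ι * b) ^ 2 / 2))⁻¹ := by
  have hcard : 2 * Fintype.card {i // i ∈ I} * Fintype.card {i // i ∉ I} * b ^ 2
      ≤ (Fintype.card ι * b) ^ 2 / 2 := by
    have hsum : (Fintype.card {i // i ∈ I} : ℝ) + Fintype.card {i // i ∉ I} = Fintype.card ι := by
      rw [Fintype.card_subtype_compl, Nat.cast_sub (Fintype.card_subtype_le _),
        add_sub_cancel]
    rw [← hsum]
    nlinarith [mul_le_mul_of_nonneg_right (four_mul_le_sq_add
      (Fintype.card {i // i ∈ I} : ℝ) (Fintype.card {i // i ∉ I} : ℝ)) (sq_nonneg b)]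
  have hsplit (x : ι → X) : ∑ p ∈ I ×ˢ Iᶜ, φ (x p.1) (x p.2)
      = ∑ i : {i // i ∈ I}, ∑ j : {j // j ∉ I}, φ (x i) (x j) := by
    rw [sum_product, sum_subtype I (p := (· ∈ I)) fun _ => Iff.rfl]
    exact sum_congr rfl fun i _ => sum_subtype Iᶜ (fun _ => mem_compl) _
  simp_rw [hsplit]
  calc
    _ = ∫ z : ({i // i ∈ I} → X) × ({i // i ∉ I} → X), Real.exp (∑ i, ∑ j, φ (z.1 i) (z.2 j))
          ∂(Measure.pi fun _ => μ).prod (Measure.pi fun _ => μ) := by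
      convert (measurePreserving_piEquivPiSubtypeProd (fun _ : ι => μ) (· ∈ I)).integral_comp'
        (fun z => Real.exp (∑ i, ∑ j, φ (z.1 i) (z.2 j))) <;> rfl
    _ ≤ (√(1 - 2 * Fintype.card {i // i ∈ I} * Fintype.card {i // i ∉ I} * b ^ 2))⁻¹ :=
      hφ.integral_exp_sum_prod_le (hcard.trans_lt h)
    _ ≤ (√(1 - (Fintype.card ι * b) ^ 2 / 2))⁻¹ :=
      inv_anti₀ (Real.sqrt_pos.2 (by linarith)) (Real.sqrt_le_sqrt (by linarith))

lemma integral_exp_sum_offDiag_le (hφ : IsDegenerateKernel φ μ μ b)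
    (h : 8 * (Fintype.card ι * b) ^ 2 < 1) :
    ∫ x : ι → X, Real.exp (∑ p ∈ univ.offDiag, φ (x p.1) (x p.2)) ∂(Measure.pi fun _ => μ)
      ≤ (√(1 - 8 * (Fintype.card ι * b) ^ 2))⁻¹ := by
  classical
  have hscale : (Fintype.card ι * (|(4 : ℝ)| * b)) ^ 2 / 2 = 8 * (Fintype.card ι * b) ^ 2 := by
    rw [abs_of_pos four_pos]
    ring
  have hint (I : Finset ι) : Integrable (fun x : ι → X => (2 ^ Fintype.card ι : ℝ)⁻¹ *
      Real.exp (∑ p ∈ I ×ˢ Iᶜ, 4 * φ (x p.1) (x p.2))) (Measure.pi fun _ => μ) :=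
    ((hφ.const_mul 4).integrable_exp_sum _ (fun p => measurable_pi_apply p.1)
      fun p => measurable_pi_apply p.2).const_mul _
  calc
    _ ≤ ∫ x : ι → X, ∑ I : Finset ι, (2 ^ Fintype.card ι : ℝ)⁻¹ *
          Real.exp (∑ p ∈ I ×ˢ Iᶜ, 4 * φ (x p.1) (x p.2)) ∂(Measure.pi fun _ => μ) :=
      integral_mono_of_nonneg (ae_of_all _ fun _ => (Real.exp_pos _).le)
        (integrable_finsetSum _ fun I _ => hint I)
        (ae_of_all _ fun x => exp_sum_offDiag_le fun p => φ (x p.1) (x p.2))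
    _ = ∑ I : Finset ι, (2 ^ Fintype.card ι : ℝ)⁻¹ * ∫ x : ι → X,
          Real.exp (∑ p ∈ I ×ˢ Iᶜ, 4 * φ (x p.1) (x p.2)) ∂(Measure.pi fun _ => μ) := by
      rw [integral_finsetSum _ fun I _ => hint I]
      simp_rw [integral_const_mul]
    _ ≤ ∑ _I : Finset ι, (2 ^ Fintype.card ι : ℝ)⁻¹ * (√(1 - 8 * (Fintype.card ι * b) ^ 2))⁻¹ := by
      gcongr with I
      rw [← hscale] at h ⊢
      exact (hφ.const_mul 4).integral_exp_sum_product_compl_le h I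
    _ = (√(1 - 8 * (Fintype.card ι * b) ^ 2))⁻¹ := by simp

lemma integrable_exp_sum_offDiag (hφ : IsDegenerateKernel φ μ μ b) :
    Integrable (fun x : ι → X => Real.exp (∑ p ∈ univ.offDiag, φ (x p.1) (x p.2)))
      (Measure.pi fun _ => μ) :=
  hφ.integrable_exp_sum _ (fun p => measurable_pi_apply p.1) fun p => measurable_pi_apply p.2

lemma integrable_cosh_sum_offDiag (hφ : IsDegenerateKernel φ μ μ b) :
    Integrable (fun x : ι → X => Real.cosh (∑ p ∈ univ.offDiag, φ (x p.1) (x p.2)))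
      (Measure.pi fun _ => μ) := by
  simp_rw [Real.cosh_eq, ← sum_neg_distrib]
  exact (hφ.integrable_exp_sum_offDiag.add hφ.neg.integrable_exp_sum_offDiag).div_const 2

lemma integral_cosh_sum_offDiag_le (hφ : IsDegenerateKernel φ μ μ b)
    (h : 8 * (Fintype.card ι * b) ^ 2 < 1) :
    ∫ x : ι → X, Real.cosh (∑ p ∈ univ.offDiag, φ (x p.1) (x p.2)) ∂(Measure.pi fun _ => μ)
      ≤ (√(1 - 8 * (Fintype.card ι * b) ^ 2))⁻¹ := by
  simp_rw [Real.cosh_eq, ← sum_neg_distrib]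
  rw [integral_div, integral_add hφ.integrable_exp_sum_offDiag hφ.neg.integrable_exp_sum_offDiag]
  linarith [hφ.integral_exp_sum_offDiag_le h, hφ.neg.integral_exp_sum_offDiag_le h]

end IsDegenerateKernel

theorem statement1_general {X : Type*} [MeasurableSpace X] {ρ : Measure X} [IsProbabilityMeasure ρ]
    {φ : X → X → ℝ} {B : ℝ} (hφ : IsDegenerateKernel φ ρ ρ B) (hB : 32 * B ^ 2 < 1) {N : ℕ}
    (hN : N ≠ 0) :
    ∫ x : Fin N → X,
        Real.exp ((N : ℝ) * |((N : ℝ) ^ 2)⁻¹ * ∑ i : Fin N, ∑ j : Fin N, φ (x i) (x j)|)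
      ∂(Measure.pi fun _ => ρ)
    ≤ 2 / (1 - 32 * B ^ 2) := by
  have : NeZero N := ⟨hN⟩
  have hψ : IsDegenerateKernel (fun x y => 2 / (N : ℝ) * φ x y) ρ ρ (|2 / (N : ℝ)| * B) :=
    hφ.const_mul _
  have hscale : 8 * ((Fintype.card (Fin N) : ℝ) * (|2 / (N : ℝ)| * B)) ^ 2 = 32 * B ^ 2 := by
    rw [Fintype.card_fin, mul_pow, mul_pow, sq_abs]
    field_simp
    ring
  calc
    _ ≤ ∫ x : Fin N → X, (Real.cosh (2 * B) +
          Real.cosh (∑ p ∈ univ.offDiag, 2 / (N : ℝ) * φ (x p.1) (x p.2)))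
          ∂(Measure.pi fun _ => ρ) :=
      integral_mono_of_nonneg (ae_of_all _ fun _ => (Real.exp_pos _).le)
        ((integrable_const _).add hψ.integrable_cosh_sum_offDiag) (ae_of_all _ fun x => by
          simpa using exp_card_mul_abs_le_cosh_add_cosh (fun i j => φ (x i) (x j))
            fun i => hφ.abs_le (x i) (x i))
    _ ≤ Real.cosh (2 * B) + (√(1 - 32 * B ^ 2))⁻¹ := by
      rw [integral_add (integrable_const _) hψ.integrable_cosh_sum_offDiag, ← hscale]
      gcongr
      · simp
      · exact hψ.integral_cosh_sum_offDiag_le (hscale.trans_lt hB)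
    _ ≤ 1 / (1 - 32 * B ^ 2) + 1 / (1 - 32 * B ^ 2) :=
      add_le_add ((cosh_le_one_div_one_sub (by nlinarith)).trans
          (one_div_le_one_div_of_le (by linarith) (by nlinarith)))
        (inv_sqrt_le_one_div (by linarith) (by linarith [sq_nonneg B]))
    _ = 2 / (1 - 32 * B ^ 2) := by ring

/-- **Large deviation estimate of Jabin–Wang, absolute-value version.**
There exists a universal constant `C > 0` such that for every `d ≥ 1`, every probability
measure `ρ̄` on the torus `𝕋^d`, and every bounded measurable function
`φ : 𝕋^d × 𝕋^d → ℝ` (with pointwise bound `B`) satisfying the cancellations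
`∫ φ(x,y) dρ̄(x) = 0` for all `y` and `∫ φ(x,y) dρ̄(y) = 0` for all `x`:
if `γ := C‖φ‖_∞² < 1` then for every `N ≥ 2`,
`∫ exp(N |⟨φ, μ_N ⊗ μ_N⟩|) dρ̄^{⊗N} ≤ 2/(1 − γ)`,
where `⟨φ, μ_N ⊗ μ_N⟩ = N⁻² ∑_{i,j} φ(x_i, x_j)`. -/
theorem statement1 :
    ∃ C : ℝ, 0 < C ∧
      ∀ (d : ℕ), 1 ≤ d →
      ∀ (ρ : Measure (Torus d)), IsProbabilityMeasure ρ →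
      ∀ (φ : Torus d → Torus d → ℝ), Measurable (Function.uncurry φ) →
      ∀ B : ℝ, (∀ x y, |φ x y| ≤ B) →
        (∀ y, ∫ x, φ x y ∂ρ = 0) →
        (∀ x, ∫ y, φ x y ∂ρ = 0) →
        C * B ^ 2 < 1 →
        ∀ N : ℕ, 2 ≤ N →
          ∫ x : Fin N → Torus d,
              Real.exp ((N : ℝ) *
                |((N : ℝ) ^ 2)⁻¹ * ∑ i : Fin N, ∑ j : Fin N, φ (x i) (x j)|)
            ∂(Measure.pi fun _ => ρ)
          ≤ 2 / (1 - C * B ^ 2) :=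
  ⟨32, by norm_num, fun _ _ _ _ _ hφ _ hB hl hr hγ _ hN =>
    statement1_general ⟨hφ, hB, hl, hr⟩ hγ (by lia)⟩
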